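/- Let K be a finite field of characteristic p and order q with [K : F_p] having 2-adic valuation s (i.e., 2^s exactly divides [K : F_p]), and let d be an integer with gcd(d, q − 1) = 1. If {W_{K,d}(a) : a ∈ K^×} = {0, A, −A} for some nonzero complex number A, then |A|^2 ≥ p^(2^s) · q. -/

import Mathlib

open scoped BigOperators Classical

/-- The canonical additive character of a finite field `K` of characteristic `p`:
`ψ_K(x) = exp(2πi · Tr_{K/F_p}(x) / p)`, where `Tr_{K/F_p}` is the absolute trace. -/
noncomputable def canonicalAddChar (p : ℕ) [Fact p.Prime] (K : Type) [Field K] [Fintype K]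
    [Algebra (ZMod p) K] (x : K) : ℂ :=
  Complex.exp (2 * Real.pi * Complex.I * ((Algebra.trace (ZMod p) K x).val : ℂ) / (p : ℂ))

/-- The Weil sum `W_{K,d}(a) = ∑_{x ∈ K} ψ_K(x^d + a·x)`. -/
noncomputable def weilSum (p : ℕ) [Fact p.Prime] (K : Type) [Field K] [Fintype K]
    [Algebra (ZMod p) K] (d : ℤ) (a : K) : ℂ :=
  ∑ x : K, canonicalAddChar p K (x ^ d + a * x)

/-- The value set `{W_{K,d}(a) : a ∈ K^×}` of the Weil sum. -/
noncomputable def weilValues (p : ℕ) [Fact p.Prime] (K : Type) [Field K] [Fintype K]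
    [Algebra (ZMod p) K] (d : ℤ) : Set ℂ :=
  {w : ℂ | ∃ a : K, a ≠ 0 ∧ weilSum p K d a = w}

/-- `d` is degenerate over a finite field of order `q` and characteristic `p` if
`d ≡ p^j (mod q − 1)` for some nonnegative integer `j`. -/
def IsDegenerate (p : ℕ) (q : ℕ) (d : ℤ) : Prop :=
  ∃ j : ℕ, d ≡ (p : ℤ) ^ j [ZMOD (q : ℤ) - 1]

noncomputable def WS {K : Type} [Field K] [Fintype K] (ψ : AddChar K ℂ) (d : ℕ) (a : K) : ℂ :=
  ∑ x : K, ψ (x ^ d + a * x)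

section moments
variable {K : Type} [Field K] [Fintype K] {d : ℕ}

theorem pow_bij (hd : d.Coprime (Fintype.card K - 1)) (hd0 : d ≠ 0) :
    Function.Bijective (fun x : K => x ^ d) := by
  rw [← Finite.injective_iff_bijective]
  intro x y hxy
  simp only at hxy
  by_cases hx : x = 0
  · subst hx
    rw [zero_pow hd0] at hxy
    exact (pow_eq_zero_iff hd0 |>.1 hxy.symm).symm
  by_cases hy : y = 0
  · subst hy
    rw [zero_pow hd0] at hxy
    exact (pow_eq_zero_iff hd0 |>.1 hxy)
  have h : (x / y) ^ d = 1 := by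
    rw [div_pow, hxy, div_self (pow_ne_zero _ hy)]
  have h2 : (x / y) ^ (Fintype.card K - 1) = 1 :=
    FiniteField.pow_card_sub_one_eq_one _ (div_ne_zero hx hy)
  have h3 : orderOf (x / y) ∣ Nat.gcd d (Fintype.card K - 1) :=
    Nat.dvd_gcd (orderOf_dvd_of_pow_eq_one h) (orderOf_dvd_of_pow_eq_one h2)
  rw [hd] at h3
  have h4 : x / y = 1 := orderOf_eq_one_iff.1 (Nat.dvd_one.1 h3)
  exact (div_eq_one_iff_eq hy).1 h4

theorem neg_pow_d (hd : d.Coprime (Fintype.card K - 1)) (hd0 : d ≠ 0) (x : K) :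
    (-x) ^ d = - (x ^ d) := by
  have h1 : ((-1 : K)) ^ d = -1 := by
    have : ((-1 : K) ^ d) ^ 2 = 1 := by
      rw [← pow_mul, mul_comm, pow_mul]; simp
    rw [sq, mul_self_eq_one_iff] at this
    rcases this with h | h
    · have := (pow_bij hd hd0).1 (a₁ := -1) (a₂ := 1) (by simpa using h)
      rw [h, this]
    · exact h
  rw [neg_eq_neg_one_mul, mul_pow, h1, neg_one_mul]

variable {ψ : AddChar K ℂ}

theorem sum_psi_mul (hψ : ψ ≠ 1) (b : K) :
    ∑ a : K, ψ (a * b) = if b = 0 then (Fintype.card K : ℂ) else 0 := by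
  have := AddChar.sum_mulShift b (AddChar.IsPrimitive.of_ne_one hψ)
  rw [this]; split_ifs <;> simp

theorem sum_psi_pow (hd : d.Coprime (Fintype.card K - 1)) (hd0 : d ≠ 0) (hψ : ψ ≠ 1) (b : K) :
    ∑ x : K, ψ (x ^ d * b) = if b = 0 then (Fintype.card K : ℂ) else 0 := by
  rw [← sum_psi_mul hψ b]
  exact Fintype.sum_bijective _ (pow_bij hd hd0) _ _ (fun x => rfl)

theorem WS_zero (hd : d.Coprime (Fintype.card K - 1)) (hd0 : d ≠ 0) (hψ : ψ ≠ 1) :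
    WS ψ d 0 = 0 := by
  have := sum_psi_pow hd hd0 hψ 1
  simpa [WS] using this

theorem WS_sum (hd0 : d ≠ 0) (hψ : ψ ≠ 1) :
    ∑ a : K, WS ψ d a = Fintype.card K := by
  unfold WS
  rw [Finset.sum_comm]
  have : ∀ x : K, ∑ a : K, ψ (x ^ d + a * x) =
      if x = 0 then (Fintype.card K : ℂ) else 0 := by
    intro x
    simp_rw [AddChar.map_add_eq_mul]
    rw [← Finset.mul_sum, sum_psi_mul hψ]
    split_ifs with h
    · simp [h, hd0]
    · simp
  simp [this]

/-- mixed second moment -/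
theorem WS_sum_sq' (hd : d.Coprime (Fintype.card K - 1)) (hd0 : d ≠ 0) (hψ : ψ ≠ 1) (j : K) :
    ∑ a : K, (∑ x : K, ψ (j * x ^ d + j * (a * x))) * WS ψ d a =
      (Fintype.card K : ℂ) * ∑ x : K, ψ (x ^ d * (j - j ^ d)) := by
  unfold WS
  simp_rw [Finset.sum_mul_sum]
  rw [Finset.sum_comm, Finset.mul_sum]
  refine Finset.sum_congr rfl fun x _ => ?_
  rw [Finset.sum_comm]
  have : ∀ y : K, ∑ a : K, ψ (j * x ^ d + j * (a * x)) * ψ (y ^ d + a * y) =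
      if y = -(j * x) then (Fintype.card K : ℂ) * ψ (x ^ d * (j - j ^ d)) else 0 := by
    intro y
    have : ∀ a : K, ψ (j * x ^ d + j * (a * x)) * ψ (y ^ d + a * y) =
       ψ (j * x ^ d + y ^ d) * ψ (a * (j * x + y)) := by
      intro a
      rw [← AddChar.map_add_eq_mul, ← AddChar.map_add_eq_mul]
      congr 1; ring
    simp_rw [this]
    rw [← Finset.mul_sum, sum_psi_mul hψ]
    have h : j * x + y = 0 ↔ y = -(j * x) := by
      rw [add_comm, add_eq_zero_iff_eq_neg]
    simp only [h]
    split_ifs with h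
    · rw [h, neg_pow_d hd hd0, mul_comm, mul_pow]; congr 2; ring
    · simp
  simp [this]

theorem WS_sum_sq (hd : d.Coprime (Fintype.card K - 1)) (hd0 : d ≠ 0) (hψ : ψ ≠ 1) :
    ∑ a : K, WS ψ d a ^ 2 = (Fintype.card K : ℂ) ^ 2 := by
  have := WS_sum_sq' hd hd0 hψ 1
  simp only [one_mul, one_pow, sub_self, mul_zero, AddChar.map_zero_eq_one, Finset.sum_const,
    Finset.card_univ, nsmul_eq_mul, mul_one] at this
  rw [sq, ← this]
  exact Finset.sum_congr rfl fun a _ => sq _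

theorem WS_sum_cube (hd : d.Coprime (Fintype.card K - 1)) (hd0 : d ≠ 0) (hψ : ψ ≠ 1) :
    ∑ a : K, WS ψ d a ^ 3 = (Fintype.card K : ℂ) ^ 2 *
      ((Finset.univ.filter (fun u : K => (u + 1) ^ d = u ^ d + 1)).card : ℂ) := by
  have h1 : ∑ a : K, WS ψ d a ^ 3 = (Fintype.card K : ℂ) *
      ∑ y : K, ∑ x : K, ψ (x ^ d + y ^ d - (x + y) ^ d) := by
    have : ∀ a : K, WS ψ d a ^ 3 = ∑ y : K, ∑ x : K, ∑ z : K,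
        ψ (x ^ d + y ^ d + z ^ d) * ψ (a * (x + y + z)) := by
      intro a
      rw [pow_succ, pow_two]
      unfold WS
      rw [Finset.sum_mul_sum, Finset.sum_mul]
      refine Finset.sum_congr rfl fun x _ => ?_
      rw [Finset.sum_mul]
      refine Finset.sum_congr rfl fun y _ => ?_
      rw [Finset.mul_sum]
      refine Finset.sum_congr rfl fun z _ => ?_
      simp_rw [← AddChar.map_add_eq_mul]
      congr 1; ring
    simp_rw [this]
    rw [Finset.sum_comm, Finset.mul_sum]
    refine Finset.sum_congr rfl fun y _ => ?_
    rw [Finset.sum_comm, Finset.mul_sum]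
    refine Finset.sum_congr rfl fun x _ => ?_
    rw [Finset.sum_comm]
    have : ∀ z : K, ∑ a : K, ψ (x ^ d + y ^ d + z ^ d) * ψ (a * (x + y + z)) =
      if z = -(x + y) then (Fintype.card K : ℂ) * ψ (x ^ d + y ^ d - (x + y) ^ d) else 0 := by
      intro z
      rw [← Finset.mul_sum, sum_psi_mul hψ]
      have h : x + y + z = 0 ↔ z = -(x + y) := by
        rw [add_comm, add_eq_zero_iff_eq_neg]
      simp only [h]
      split_ifs with h
      · rw [h, neg_pow_d hd hd0, mul_comm, sub_eq_add_neg]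
      · simp
    simp [this]
  rw [h1]
  have h2 : ∀ y : K, ∑ x : K, ψ (x ^ d + y ^ d - (x + y) ^ d) =
      if y = 0 then (Fintype.card K : ℂ) else
        ∑ u : K, ψ (y ^ d * (u ^ d + 1 - (u + 1) ^ d)) := by
    intro y
    split_ifs with h
    · simp [h, hd0]
    · symm
      refine Fintype.sum_bijective (fun u => u * y) (mulRight_bijective₀ y h) _ _ (fun u => ?_)
      congr 1
      have : u * y + y = (u + 1) * y := by ring
      rw [this, mul_pow, mul_pow]; ring
  simp_rw [h2]
  have h3 : ∑ y : K, (if y = 0 then (Fintype.card K : ℂ) else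
        ∑ u : K, ψ (y ^ d * (u ^ d + 1 - (u + 1) ^ d))) =
      ∑ y : K, ∑ u : K, ψ (y ^ d * (u ^ d + 1 - (u + 1) ^ d)) := by
    refine Finset.sum_congr rfl fun y _ => ?_
    split_ifs with h
    · simp [h, hd0]
    · rfl
  rw [h3, Finset.sum_comm]
  simp_rw [sum_psi_pow hd hd0 hψ]
  rw [Finset.sum_ite]
  simp only [Finset.sum_const, Finset.sum_const_zero, add_zero, nsmul_eq_mul]
  have : (Finset.univ.filter fun u : K => u ^ d + 1 - (u + 1) ^ d = 0) =
     (Finset.univ.filter (fun u : K => (u + 1) ^ d = u ^ d + 1)) := by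
    ext u
    simp only [Finset.mem_filter, Finset.mem_univ, true_and]
    rw [sub_eq_zero, eq_comm]
  rw [this]; ring
end moments

section HD
set_option linter.unusedSectionVars false
open Polynomial
variable {F : Type} [Field F] [Fintype F]

theorem finite_monic (N : ℕ) : {f : F[X] | f.Monic ∧ f.natDegree ≤ N}.Finite := by
  have h : Finite (Polynomial.degreeLT F (N + 1)) :=
    Finite.of_equiv _ (Polynomial.degreeLTEquiv F (N + 1)).symm.toEquiv
  have h2 : (Polynomial.degreeLT F (N + 1) : Set F[X]).Finite := Set.toFinite _
  refine h2.subset ?_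
  rintro f ⟨hf, hN⟩
  simp only [SetLike.mem_coe, Polynomial.mem_degreeLT]
  exact lt_of_le_of_lt Polynomial.degree_le_natDegree (by exact_mod_cast Nat.lt_succ_of_le hN)

/-- monic polynomials of degree k -/
noncomputable def MD (F : Type) [Field F] [Fintype F] (k : ℕ) : Finset F[X] :=
  ((finite_monic (F := F) k).subset
    (show {f : F[X] | f.Monic ∧ f.natDegree = k} ⊆ _ from fun _ h => ⟨h.1, h.2.le⟩)).toFinset

theorem mem_MD {k : ℕ} {f : F[X]} : f ∈ MD F k ↔ f.Monic ∧ f.natDegree = k := by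
  simp [MD]

/-- monic irreducible polynomials of degree at most N -/
noncomputable def IR (F : Type) [Field F] [Fintype F] (N : ℕ) : Finset F[X] :=
  ((finite_monic (F := F) N).subset
    (show {f : F[X] | f.Monic ∧ Irreducible f ∧ f.natDegree ≤ N} ⊆ _ from
      fun _ h => ⟨h.1, h.2.2⟩)).toFinset

theorem mem_IR {N : ℕ} {f : F[X]} :
    f ∈ IR F N ↔ f.Monic ∧ Irreducible f ∧ f.natDegree ≤ N := by
  simp [IR]

noncomputable def lam (χ : MulChar F ℂ) (ψ : AddChar F ℂ) (f : F[X]) : ℂ :=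
  χ ((-1) ^ f.natDegree * f.coeff 0) * ψ (-f.nextCoeff)

variable (χ : MulChar F ℂ) (ψ : AddChar F ℂ)

theorem lam_mul {f g : F[X]} (hf : f.Monic) (hg : g.Monic) :
    lam χ ψ (f * g) = lam χ ψ f * lam χ ψ g := by
  unfold lam
  rw [hf.natDegree_mul hg, mul_coeff_zero, hf.nextCoeff_mul hg, neg_add,
    AddChar.map_add_eq_mul, pow_add]
  have : (-1 : F) ^ f.natDegree * (-1) ^ g.natDegree * (f.coeff 0 * g.coeff 0) =
    ((-1 : F) ^ f.natDegree * f.coeff 0) * ((-1) ^ g.natDegree * g.coeff 0) := by ring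
  rw [this, map_mul]; ring

theorem lam_one : lam χ ψ 1 = 1 := by
  simp [lam, nextCoeff]

theorem lam_pow {f : F[X]} (hf : f.Monic) (j : ℕ) :
    lam χ ψ (f ^ j) = lam χ ψ f ^ j := by
  induction j with
  | zero => simp [lam_one]
  | succ j ih => rw [pow_succ, lam_mul χ ψ (hf.pow j) hf, ih, pow_succ]

noncomputable def SS (k : ℕ) : ℂ := ∑ f ∈ MD F k, lam χ ψ f

theorem SS_zero : SS χ ψ 0 = 1 := by
  have : MD F 0 = {1} := by
    ext f
    rw [mem_MD, Finset.mem_singleton]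
    constructor
    · rintro ⟨h1, h2⟩; exact h1.natDegree_eq_zero.1 h2
    · rintro rfl; simp
  simp [SS, this, lam_one]

theorem SS_one : SS χ ψ 1 = gaussSum χ ψ := by
  unfold SS gaussSum
  symm
  refine Finset.sum_bij (fun a _ => X - C a) ?_ ?_ ?_ ?_
  · intro a _; rw [mem_MD]; exact ⟨monic_X_sub_C a, natDegree_X_sub_C a⟩
  · intro a _ b _ h; simpa using h
  · intro f hf
    rw [mem_MD] at hf
    refine ⟨-f.coeff 0, Finset.mem_univ _, ?_⟩
    rw [C_neg, sub_neg_eq_add]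
    exact (hf.1.eq_X_add_C hf.2).symm
  · intro a _
    simp [lam, nextCoeff_X_sub_C]

theorem SS_big (hψ : ψ ≠ 1) {k : ℕ} (hk : 2 ≤ k) : SS χ ψ k = 0 := by
  obtain ⟨b, hb⟩ := AddChar.ne_one_iff.1 hψ
  have hnd : ∀ (c : F), ∀ f ∈ MD F k, (f + C c * X ^ (k - 1)) ∈ MD F k := by
    intro c f hf
    rw [mem_MD] at *
    have hlt : (C c * X ^ (k - 1)).degree < f.degree := by
      refine lt_of_le_of_lt (degree_C_mul_X_pow_le _ _) ?_
      rw [degree_eq_natDegree hf.1.ne_zero, hf.2]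
      exact_mod_cast Nat.sub_lt (by omega) one_pos
    exact ⟨hf.1.add_of_left hlt, by rw [natDegree_add_eq_left_of_degree_lt hlt, hf.2]⟩
  have key : SS χ ψ k = ψ b * SS χ ψ k := by
    conv_lhs => unfold SS
    unfold SS
    rw [Finset.mul_sum]
    symm
    refine Finset.sum_bij' (fun f _ => f + C (-b) * X ^ (k - 1)) (fun f _ => f + C b * X ^ (k - 1))
      (fun f hf => hnd _ f hf) (fun f hf => hnd _ f hf) ?_ ?_ ?_
    · intro f _; simp
    · intro f _; simp
    · intro f hf
      have hf2 := hnd (-b) f hf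
      rw [mem_MD] at hf hf2
      unfold lam
      rw [hf2.2, hf.2]
      rw [nextCoeff_of_natDegree_pos (by omega), nextCoeff_of_natDegree_pos (by omega)]
      rw [hf2.2, hf.2]
      have h0 : (0 : ℕ) ≠ k - 1 := by omega
      simp only [coeff_add, coeff_C_mul, coeff_X_pow, if_true, h0, if_false, mul_zero, add_zero,
        mul_one, neg_add, neg_neg, AddChar.map_add_eq_mul]
      ring
  have h2 : (ψ b - 1) * SS χ ψ k = 0 := by linear_combination -key
  rcases mul_eq_zero.1 h2 with h | h
  · exact absurd (sub_eq_zero.1 h) hb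
  · exact h

theorem degree_formula {N : ℕ} {f : F[X]} (hf : f.Monic) (hN : f.natDegree ≤ N) :
    (f.natDegree : ℂ) = ∑ P ∈ IR F N, ∑ j ∈ Finset.Icc 1 N,
      if P ^ j ∣ f then (P.natDegree : ℂ) else 0 := by
  have hcount : ∀ P ∈ IR F N, (∑ j ∈ Finset.Icc 1 N, if P ^ j ∣ f then (P.natDegree : ℂ) else 0)
      = ((UniqueFactorizationMonoid.normalizedFactors f).count P * P.natDegree : ℕ) := by
    intro P hP
    rw [mem_IR] at hP
    have hiff : ∀ j : ℕ, P ^ j ∣ f ↔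
        j ≤ (UniqueFactorizationMonoid.normalizedFactors f).count P := by
      intro j
      rw [pow_dvd_iff_le_emultiplicity,
        UniqueFactorizationMonoid.emultiplicity_eq_count_normalizedFactors hP.2.1 hf.ne_zero,
        hP.1.normalize_eq_self]
      exact_mod_cast Iff.rfl
    have hle : (UniqueFactorizationMonoid.normalizedFactors f).count P ≤ N := by
      have h1 := (hiff _).2 le_rfl
      have h2 := natDegree_le_of_dvd h1 hf.ne_zero
      rw [natDegree_pow] at h2
      have h3 : 0 < P.natDegree := hP.2.1.natDegree_pos
      nlinarith
    simp_rw [hiff]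
    rw [Finset.sum_ite, Finset.sum_const, Finset.sum_const_zero, add_zero]
    have : (Finset.Icc 1 N).filter
        (fun j => j ≤ (UniqueFactorizationMonoid.normalizedFactors f).count P) =
        Finset.Icc 1 ((UniqueFactorizationMonoid.normalizedFactors f).count P) := by
      ext j; simp only [Finset.mem_filter, Finset.mem_Icc]; omega
    rw [this]; simp
  rw [Finset.sum_congr rfl hcount, ← Nat.cast_sum]
  congr 1
  have h1 : f = (UniqueFactorizationMonoid.normalizedFactors f).prod := by
    conv_lhs => rw [← hf.normalize_eq_self]
    exact (UniqueFactorizationMonoid.prod_normalizedFactors_eq hf.ne_zero).symm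
  have hmem : ∀ P ∈ UniqueFactorizationMonoid.normalizedFactors f, P ∈ IR F N := by
    intro P hP
    have hirr := UniqueFactorizationMonoid.irreducible_of_normalized_factor P hP
    have hnorm := UniqueFactorizationMonoid.normalize_normalized_factor P hP
    rw [mem_IR]
    refine ⟨?_, hirr, ?_⟩
    · rw [← hnorm]; exact monic_normalize hirr.ne_zero
    · exact (natDegree_le_of_dvd (UniqueFactorizationMonoid.dvd_of_mem_normalizedFactors hP)
        hf.ne_zero).trans hN
  conv_lhs => rw [h1]
  rw [natDegree_multiset_prod_of_monic _ (fun P hP => (mem_IR.1 (hmem P hP)).1)]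
  rw [Finset.sum_multiset_map_count]
  refine Finset.sum_subset (fun P hP => hmem P (Multiset.mem_toFinset.1 hP)) ?_ |>.trans ?_
  · intro P _ hP
    rw [Multiset.mem_toFinset] at hP
    rw [Multiset.count_eq_zero_of_notMem hP, zero_smul]
  · simp

theorem sum_dvd {P : F[X]} (hP : P.Monic) (j r : ℕ) :
    ∑ f ∈ MD F r, (if P ^ j ∣ f then lam χ ψ f else 0) =
      if j * P.natDegree ≤ r then lam χ ψ P ^ j * SS χ ψ (r - j * P.natDegree) else 0 := by
  have hPj := hP.pow j
  have hdeg : (P ^ j).natDegree = j * P.natDegree := hP.natDegree_pow j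
  split_ifs with h
  · unfold SS
    rw [← Finset.sum_filter, Finset.mul_sum]
    symm
    refine Finset.sum_bij (fun g _ => P ^ j * g) ?_ ?_ ?_ ?_
    · intro g hg
      rw [mem_MD] at hg
      rw [Finset.mem_filter, mem_MD]
      refine ⟨⟨hPj.mul hg.1, ?_⟩, dvd_mul_right _ _⟩
      rw [hPj.natDegree_mul hg.1, hdeg, hg.2]; omega
    · intro a _ b _ hab
      exact mul_left_cancel₀ hPj.ne_zero hab
    · intro f hf
      rw [Finset.mem_filter, mem_MD] at hf
      obtain ⟨⟨h1, h2⟩, g, rfl⟩ := hf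
      have hg : g.Monic := hPj.of_mul_monic_left h1
      refine ⟨g, ?_, rfl⟩
      rw [mem_MD]
      refine ⟨hg, ?_⟩
      rw [hPj.natDegree_mul hg, hdeg] at h2
      omega
    · intro g hg
      rw [mem_MD] at hg
      rw [lam_mul χ ψ hPj hg.1, lam_pow χ ψ hP]
  · refine Finset.sum_eq_zero fun f hf => ?_
    rw [mem_MD] at hf
    rw [if_neg]
    intro hd
    have := natDegree_le_of_dvd hd hf.1.ne_zero
    rw [hdeg, hf.2] at this
    exact h this

noncomputable def CSum (N k : ℕ) : ℂ := ∑ P ∈ IR F N, ∑ j ∈ Finset.Icc 1 N,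
  if j * P.natDegree = k then (P.natDegree : ℂ) * lam χ ψ P ^ j else 0

theorem CC_rec (hψ : ψ ≠ 1) {N r : ℕ} (hr : r + 1 ≤ N) :
    ((r + 1 : ℕ) : ℂ) * SS χ ψ (r + 1) = CSum χ ψ N (r + 1) + gaussSum χ ψ * CSum χ ψ N r := by
  have h1 : ((r + 1 : ℕ) : ℂ) * SS χ ψ (r + 1) = ∑ P ∈ IR F N, ∑ j ∈ Finset.Icc 1 N,
      (P.natDegree : ℂ) * ∑ f ∈ MD F (r + 1), (if P ^ j ∣ f then lam χ ψ f else 0) := by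
    unfold SS
    rw [Finset.mul_sum]
    have : ∀ f ∈ MD F (r + 1), ((r + 1 : ℕ) : ℂ) * lam χ ψ f = ∑ P ∈ IR F N, ∑ j ∈ Finset.Icc 1 N,
      (P.natDegree : ℂ) * (if P ^ j ∣ f then lam χ ψ f else 0) := by
      intro f hf
      rw [mem_MD] at hf
      have := degree_formula (N := N) hf.1 (by omega)
      rw [hf.2] at this
      rw [this, Finset.sum_mul]
      refine Finset.sum_congr rfl fun P _ => ?_
      rw [Finset.sum_mul]
      refine Finset.sum_congr rfl fun j _ => ?_
      split_ifs <;> simp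
    rw [Finset.sum_congr rfl this, Finset.sum_comm]
    refine Finset.sum_congr rfl fun P _ => ?_
    rw [Finset.sum_comm]
    refine Finset.sum_congr rfl fun j _ => ?_
    rw [Finset.mul_sum]
  rw [h1]
  unfold CSum
  rw [Finset.mul_sum, ← Finset.sum_add_distrib]
  refine Finset.sum_congr rfl fun P hP => ?_
  rw [Finset.mul_sum, ← Finset.sum_add_distrib]
  refine Finset.sum_congr rfl fun j hj => ?_
  rw [mem_IR] at hP
  rw [sum_dvd χ ψ hP.1]
  set m := j * P.natDegree
  rcases lt_trichotomy m r with h | h | h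
  · rw [if_pos (by omega), if_neg (by omega), if_neg (by omega), SS_big χ ψ hψ (by omega)]
    simp
  · rw [if_pos (by omega), if_neg (by omega), if_pos (by omega), h, Nat.add_sub_cancel_left, SS_one]
    ring
  · rw [if_neg (show ¬ m = r by omega)]
    by_cases h2 : m = r + 1
    · rw [if_pos (by omega), if_pos h2, h2, Nat.sub_self, SS_zero]; ring
    · rw [if_neg (by omega), if_neg h2]; simp

theorem CC_zero (N : ℕ) : CSum χ ψ N 0 = 0 := by
  unfold CSum
  refine Finset.sum_eq_zero fun P hP => Finset.sum_eq_zero fun j hj => ?_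
  rw [mem_IR] at hP
  rw [Finset.mem_Icc] at hj
  have := hP.2.1.natDegree_pos
  rw [if_neg]
  exact Nat.mul_ne_zero (by omega) (by omega)

theorem CC_eq (hψ : ψ ≠ 1) {N : ℕ} (r : ℕ) (hr : r + 1 ≤ N) :
    CSum χ ψ N (r + 1) = (-1) ^ r * gaussSum χ ψ ^ (r + 1) := by
  induction r with
  | zero =>
    have := CC_rec χ ψ hψ hr
    rw [SS_one, CC_zero] at this
    simp at this ⊢
    exact this.symm
  | succ r ih =>
    have := CC_rec χ ψ hψ hr
    rw [SS_big χ ψ hψ (by omega), ih (by omega)] at this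
    rw [pow_succ (-1 : ℂ), pow_succ _ (r + 1)]
    linear_combination -this

variable (K : Type) [Field K] [Fintype K] [Algebra F K]

theorem lam_minpoly (x : K) :
    χ (Algebra.norm F x) * ψ (Algebra.trace F K x) =
      lam χ ψ (minpoly F x) ^ (Module.finrank F K / (minpoly F x).natDegree) := by
  have hint : IsIntegral F x := Algebra.IsIntegral.isIntegral x
  have hfr : Module.finrank F (IntermediateField.adjoin F {x}) = (minpoly F x).natDegree :=
    IntermediateField.adjoin.finrank hint
  have hpos : 0 < (minpoly F x).natDegree := minpoly.natDegree_pos hint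
  have hdiv : Module.finrank F K / (minpoly F x).natDegree =
      Module.finrank (IntermediateField.adjoin F {x}) K := by
    rw [← Module.finrank_mul_finrank F (IntermediateField.adjoin F {x}) K, hfr,
      Nat.mul_div_cancel_left _ hpos]
  rw [hdiv, Algebra.norm_eq_norm_adjoin, trace_eq_finrank_mul_minpoly_nextCoeff]
  have hn : Algebra.norm F (IntermediateField.AdjoinSimple.gen F x) =
      (-1) ^ (minpoly F x).natDegree * (minpoly F x).coeff 0 := by
    have := Algebra.PowerBasis.norm_gen_eq_coeff_zero_minpoly
      (IntermediateField.adjoin.powerBasis hint)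
    rw [IntermediateField.adjoin.powerBasis_gen, IntermediateField.minpoly_gen] at this
    rw [this, IntermediateField.adjoin.powerBasis_dim]
  rw [hn]
  unfold lam
  rw [map_pow, ← nsmul_eq_mul, AddChar.map_nsmul_eq_pow, mul_pow]

theorem card_minpoly {P : F[X]} (hP : P.Monic) (hi : Irreducible P)
    (hd : P.natDegree ∣ Module.finrank F K) :
    (Finset.univ.filter (fun x : K => minpoly F x = P)).card = P.natDegree := by
  have h1 := (hi.natDegree_dvd_iff_dvd_X_pow_card_pow_sub_X).1 hd
  rw [Nat.card_eq_fintype_card, ← Module.card_eq_pow_finrank (K := F) (V := K)] at h1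
  have hsplit : (P.map (algebraMap F K)).Splits := by
    refine Splits.of_dvd (FiniteField.isSplittingField_sub K F).splits ?_
      (Polynomial.map_dvd (algebraMap F K) h1)
    exact (Polynomial.map_ne_zero_iff (algebraMap F K).injective).2
      (FiniteField.X_pow_card_sub_X_ne_zero F Fintype.one_lt_card)
  have hsep : P.Separable := PerfectField.separable_of_irreducible hi
  have := Polynomial.card_rootSet_eq_natDegree hsep hsplit
  rw [← this]
  rw [Fintype.card_subtype]
  congr 1
  ext x
  simp only [Finset.mem_filter, Finset.mem_univ, true_and]
  rw [Polynomial.mem_rootSet]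
  constructor
  · rintro rfl
    exact ⟨hi.ne_zero, minpoly.aeval F x⟩
  · rintro ⟨_, h⟩
    exact (minpoly.eq_of_irreducible_of_monic hi h hP).symm

theorem hasse_davenport (hψ : ψ ≠ 1) :
    ∑ x : K, χ (Algebra.norm F x) * ψ (Algebra.trace F K x) =
      (-1) ^ (Module.finrank F K - 1) * gaussSum χ ψ ^ (Module.finrank F K) := by
  have hN : 0 < Module.finrank F K := Module.finrank_pos
  have h := CC_eq χ ψ hψ (N := Module.finrank F K) (Module.finrank F K - 1) (by omega)
  rw [Nat.sub_add_cancel hN] at h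
  rw [← h]
  unfold CSum
  have hmaps : ∀ x ∈ (Finset.univ : Finset K), minpoly F x ∈ IR F (Module.finrank F K) := by
    intro x _
    have hint : IsIntegral F x := Algebra.IsIntegral.isIntegral x
    rw [mem_IR]
    exact ⟨minpoly.monic hint, minpoly.irreducible hint, minpoly.natDegree_le x⟩
  rw [← Finset.sum_fiberwise_of_maps_to hmaps]
  refine Finset.sum_congr rfl fun P hP => ?_
  rw [mem_IR] at hP
  have hpos := hP.2.1.natDegree_pos
  have h1 : ∀ x ∈ Finset.univ.filter (fun x : K => minpoly F x = P),
      χ (Algebra.norm F x) * ψ (Algebra.trace F K x) =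
      lam χ ψ P ^ (Module.finrank F K / P.natDegree) := by
    intro x hx
    rw [Finset.mem_filter] at hx
    rw [lam_minpoly, hx.2]
  rw [Finset.sum_congr rfl h1, Finset.sum_const, nsmul_eq_mul]
  by_cases hd : P.natDegree ∣ Module.finrank F K
  · rw [card_minpoly K hP.1 hP.2.1 hd]
    obtain ⟨e, he⟩ := hd
    have he1 : 1 ≤ e := by
      rcases Nat.eq_zero_or_pos e with h | h
      · subst h; omega
      · exact h
    rw [Finset.sum_eq_single e]
    · rw [if_pos (by rw [he, mul_comm]), he, Nat.mul_div_cancel_left _ hpos]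
    · intro j _ hj
      rw [if_neg]
      intro h2
      rw [he, mul_comm] at h2
      exact hj (Nat.eq_of_mul_eq_mul_left hpos h2)
    · intro h2
      exfalso; apply h2
      rw [Finset.mem_Icc]
      refine ⟨he1, ?_⟩
      rw [he]; nlinarith
  · have : Finset.univ.filter (fun x : K => minpoly F x = P) = ∅ := by
      rw [Finset.filter_eq_empty_iff]
      rintro x _ rfl
      exact hd (minpoly.degree_dvd (Algebra.IsIntegral.isIntegral x))
    rw [this]
    simp only [Finset.card_empty, Nat.cast_zero, zero_mul]
    symm
    refine Finset.sum_eq_zero fun j _ => ?_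
    rw [if_neg]
    intro h2
    exact hd ⟨j, by rw [← h2, mul_comm]⟩
end HD

section descent

theorem hat_eq {K : Type} [Field K] [Fintype K] {d d' : ℕ} (hb : Function.Bijective (fun x : K => x ^ d))
    (hd' : ∀ x : K, (x ^ d) ^ d' = x) (ψ : AddChar K ℂ) (η : K →*₀ ℂ) (hη : ∑ x : K, η x = 0) :
    ∑ a : K, η a * WS ψ d a = (∑ a : K, η a * ψ a) * ∑ y : K, η (y⁻¹) ^ d' * ψ y := by
  have h1 : ∑ y : K, η (y⁻¹) ^ d' * ψ y = ∑ x : K, η (x⁻¹) * ψ (x ^ d) := by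
    symm
    refine Fintype.sum_bijective _ hb _ _ (fun x => ?_)
    rw [← map_pow, inv_pow, hd']
  rw [h1]
  unfold WS
  simp_rw [Finset.mul_sum]
  rw [Finset.sum_comm]
  refine Finset.sum_congr rfl fun x _ => ?_
  by_cases hx : x = 0
  · subst hx
    simp only [mul_zero, add_zero, inv_zero, map_zero, zero_mul]
    rw [← Finset.sum_mul, hη, zero_mul]
  · have h2 : ∑ a : K, η a * ψ a = ∑ a : K, η (a * x) * ψ (a * x) :=
      (Fintype.sum_bijective (fun a => a * x) (mulRight_bijective₀ x hx) _ _ (fun u => rfl)).symm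
    rw [h2, Finset.sum_mul]
    refine Finset.sum_congr rfl fun a _ => ?_
    rw [AddChar.map_add_eq_mul, map_mul η]
    have : η x * η x⁻¹ = 1 := by
      rw [← map_mul, mul_inv_cancel₀ hx, map_one]
    linear_combination (-(η a * ψ (a * x) * ψ (x ^ d))) * this

theorem exists_inv_exp {q d : ℕ} (hq : 2 ≤ q) (hd : d.Coprime (q - 1)) :
    ∃ d' : ℕ, d' ≠ 0 ∧ d * d' ≡ 1 [MOD (q - 1)] := by
  by_cases h : q - 1 = 1
  · exact ⟨1, one_ne_zero, by rw [h]; exact Nat.modEq_one⟩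
  · obtain ⟨m, hm⟩ := Nat.exists_mul_mod_eq_one_of_coprime hd (by omega)
    refine ⟨m, ?_, ?_⟩
    · rintro rfl; simp at hm
    · show d * m % (q - 1) = 1 % (q - 1)
      rw [hm.2, Nat.mod_eq_of_lt (by omega)]

theorem pow_inv_exp {K : Type} [Field K] [Fintype K] {d d' : ℕ} (hd0 : d ≠ 0) (hd'0 : d' ≠ 0)
    (h : d * d' ≡ 1 [MOD (Fintype.card K - 1)]) (x : K) : (x ^ d) ^ d' = x := by
  rw [← pow_mul]
  by_cases hx : x = 0
  · subst hx; rw [zero_pow (Nat.mul_ne_zero hd0 hd'0)]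
  · have h1 : orderOf x ∣ Fintype.card K - 1 :=
      orderOf_dvd_of_pow_eq_one (FiniteField.pow_card_sub_one_eq_one x hx)
    have h3 : d * d' ≡ 1 [MOD orderOf x] := h.of_dvd h1
    rw [← pow_mod_orderOf, h3, pow_mod_orderOf, pow_one]

variable {E : Type} [Field E] [Fintype E]

noncomputable def normHomC (K : Type) [Field K] [Fintype K] [Algebra E K] (χ : MulChar E ℂ) :
    K →*₀ ℂ where
  toFun x := χ (Algebra.norm E x)
  map_zero' := by
    rw [Algebra.norm_zero, MulChar.map_zero]
  map_one' := by simp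
  map_mul' x y := by simp

noncomputable def chHom (χ : MulChar E ℂ) : E →*₀ ℂ where
  toFun x := χ x
  map_zero' := χ.map_zero
  map_one' := by simp
  map_mul' x y := by simp

theorem hat_pow (K : Type) [Field K] [Fintype K] [Algebra E K] {d : ℕ}
    (hdK : d.Coprime (Fintype.card K - 1)) (hd0 : d ≠ 0) {ψ : AddChar E ℂ} (hψ : ψ ≠ 1)
    {ψK : AddChar K ℂ} (hψK : ψK ≠ 1) (htr : ∀ x, ψK x = ψ (Algebra.trace E K x))
    (χ : MulChar E ℂ) :
    ∑ a : K, χ (Algebra.norm E a) * WS ψK d a =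
      (∑ a : E, χ a * WS ψ d a) ^ (Module.finrank E K) := by
  have hcard : Fintype.card K = Fintype.card E ^ Module.finrank E K :=
    Module.card_eq_pow_finrank
  have hdvd : Fintype.card E - 1 ∣ Fintype.card K - 1 := by
    rw [hcard]
    simpa using Nat.sub_dvd_pow_sub_pow (Fintype.card E) 1 (Module.finrank E K)
  have hdE : d.Coprime (Fintype.card E - 1) := Nat.Coprime.coprime_dvd_right hdvd hdK
  by_cases hχ : χ = 1
  · subst hχ
    have key : ∀ (L : Type) [Field L] [Fintype L] (φ : AddChar L ℂ) (η : L → ℂ)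
        (_ : ∀ x, η x = if x = 0 then 0 else 1) (_ : φ ≠ 1)
        (_ : d.Coprime (Fintype.card L - 1)),
        ∑ a : L, η a * WS φ d a = Fintype.card L := by
      intro L _ _ φ η hη hφ hdL
      rw [← WS_sum hd0 hφ]
      refine Finset.sum_congr rfl fun a _ => ?_
      rw [hη]
      split_ifs with h
      · rw [h, WS_zero hdL hd0 hφ]; simp
      · simp
    rw [key K ψK _ _ hψK hdK, key E ψ _ _ hψ hdE, hcard]
    · push_cast; rfl
    · intro x
      split_ifs with h
      · rw [h, MulChar.map_zero]
      · exact MulChar.one_apply (Ne.isUnit h)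
    · intro x
      split_ifs with h
      · rw [h, Algebra.norm_zero, MulChar.map_zero]
      · exact MulChar.one_apply (Ne.isUnit (Algebra.norm_ne_zero_iff.2 h))
  · obtain ⟨d', hd'0, hd'⟩ := exists_inv_exp (Fintype.one_lt_card (α := K)) hdK
    have hsE : ∑ x : E, chHom χ x = 0 := MulChar.sum_eq_zero_of_ne_one hχ
    have hsK : ∑ x : K, normHomC K χ x = 0 := by
      obtain ⟨u, hu⟩ := MulChar.ne_one_iff.1 hχ
      obtain ⟨v, hv⟩ := FiniteField.norm_surjective E K (u : E)
      have hv0 : v ≠ 0 := by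
        rintro rfl
        rw [Algebra.norm_zero] at hv
        exact u.ne_zero hv.symm
      have h1 : ∑ x : K, normHomC K χ x = χ u * ∑ x : K, normHomC K χ x := by
        conv_lhs => rw [← Fintype.sum_bijective (fun a => v * a) (mulLeft_bijective₀ v hv0) _ _
          (fun u => rfl)]
        rw [Finset.mul_sum]
        refine Finset.sum_congr rfl fun a _ => ?_
        rw [map_mul]
        congr 1
        show χ (Algebra.norm E v) = _
        rw [hv]
      have h2 : (χ u - 1) * ∑ x : K, normHomC K χ x = 0 := by linear_combination -h1
      exact (mul_eq_zero.1 h2).resolve_left (sub_ne_zero.2 hu)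
    have e1 := hat_eq (pow_bij hdK hd0) (pow_inv_exp hd0 hd'0 hd') ψK (normHomC K χ) hsK
    have e2 := hat_eq (pow_bij hdE hd0) (pow_inv_exp hd0 hd'0 (hd'.of_dvd hdvd)) ψ (chHom χ) hsE
    have f1 : ∑ a : K, χ (Algebra.norm E a) * WS ψK d a = _ := e1
    have f2 : ∑ a : E, χ a * WS ψ d a = _ := e2
    rw [f1, f2]
    have g1 : ∀ a : E, chHom χ a = χ a := fun _ => rfl
    have g2 : ∀ a : K, normHomC K χ a = χ (Algebra.norm E a) := fun _ => rfl
    have g3 : ∀ y : E, χ y⁻¹ ^ d' = (χ⁻¹ ^ d') y := by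
      intro y
      rw [MulChar.pow_apply' _ hd'0, MulChar.inv_apply']
    have g4 : ∀ y : K, Algebra.norm E y⁻¹ = (Algebra.norm E y)⁻¹ := by
      intro y
      by_cases hy : y = 0
      · subst hy; rw [inv_zero, Algebra.norm_zero, inv_zero]
      · refine eq_inv_of_mul_eq_one_left ?_
        rw [← map_mul, inv_mul_cancel₀ hy, map_one]
    simp_rw [g2, g1, g4, g3, htr]
    rw [hasse_davenport χ ψ K hψ, hasse_davenport (χ⁻¹ ^ d') ψ K hψ]
    unfold gaussSum
    rw [mul_pow]
    have : ((-1 : ℂ) ^ (Module.finrank E K - 1)) * ((-1 : ℂ) ^ (Module.finrank E K - 1)) = 1 := by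
      rw [← mul_pow]; simp
    linear_combination ((∑ a : E, χ a * ψ a) ^ Module.finrank E K *
      (∑ a : E, (χ⁻¹ ^ d') a * ψ a) ^ Module.finrank E K) * this

noncomputable instance mulCharFintypeC : Fintype (MulChar E ℂ) := Fintype.ofFinite _

theorem mulchar_orth (a b : E) (ha : a ≠ 0) :
    ∑ χ : MulChar E ℂ, χ (a⁻¹) * χ b = if b = a then ((Fintype.card E : ℂ) - 1) else 0 := by
  simp_rw [← map_mul]
  split_ifs with h
  · subst h
    rw [inv_mul_cancel₀ ha]
    simp only [map_one, Finset.sum_const, Finset.card_univ, nsmul_eq_mul, mul_one]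
    rw [← Nat.card_eq_fintype_card, MulChar.card_eq_card_units_of_hasEnoughRootsOfUnity,
      Nat.card_eq_fintype_card, Fintype.card_units, Nat.cast_sub Fintype.card_pos]
    simp
  · have hne : a⁻¹ * b ≠ 1 := by
      intro h2
      apply h
      field_simp at h2
      exact h2
    obtain ⟨χ₀, h0⟩ := MulChar.exists_apply_ne_one_of_hasEnoughRootsOfUnity E ℂ hne
    have h1 : ∑ χ : MulChar E ℂ, χ (a⁻¹ * b) = χ₀ (a⁻¹ * b) * ∑ χ : MulChar E ℂ, χ (a⁻¹ * b) := by
      conv_lhs => rw [← Fintype.sum_bijective (fun χ => χ₀ * χ) (Group.mulLeft_bijective χ₀) _ _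
          (fun u => rfl)]
      rw [Finset.mul_sum]
      rfl
    have h2 : (χ₀ (a⁻¹ * b) - 1) * ∑ χ : MulChar E ℂ, χ (a⁻¹ * b) = 0 := by linear_combination -h1
    exact (mul_eq_zero.1 h2).resolve_left (sub_ne_zero.2 h0)

theorem mulchar_integral (χ : MulChar E ℂ) (a : E) : IsIntegral ℤ (χ a) := by
  by_cases ha : a = 0
  · subst ha; rw [MulChar.map_zero]; exact isIntegral_zero
  · have h : χ a ^ (Fintype.card E - 1) = 1 := by
      rw [← map_pow, FiniteField.pow_card_sub_one_eq_one a ha, map_one]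
    have hpos : 0 < Fintype.card E - 1 := by
      have := Fintype.one_lt_card (α := E); omega
    exact IsIntegral.of_pow hpos (by rw [h]; exact isIntegral_one)

theorem descent (K : Type) [Field K] [Fintype K] [Algebra E K] {d : ℕ}
    (hdK : d.Coprime (Fintype.card K - 1)) (hd0 : d ≠ 0) {ψ : AddChar E ℂ} (hψ : ψ ≠ 1)
    {ψK : AddChar K ℂ} (hψK : ψK ≠ 1) (htr : ∀ x, ψK x = ψ (Algebra.trace E K x))
    (P : ℕ) (hP : P ≠ 0) (hdiv : ∀ a : K, ∃ w : ℤ, WS ψK d a = P * w) (a : E) (ha : a ≠ 0) :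
    IsIntegral ℤ ((((Fintype.card E : ℂ) - 1) * WS ψ d a) ^ (Module.finrank E K) / P) := by
  have hr : 0 < Module.finrank E K := Module.finrank_pos
  obtain ⟨ρ, hρ⟩ := IsAlgClosed.exists_pow_nat_eq (P : ℂ) hr
  have hPc : (P : ℂ) ≠ 0 := by exact_mod_cast hP
  have hχ : ∀ χ : MulChar E ℂ, IsIntegral ℤ ((∑ b : E, χ b * WS ψ d b) / ρ) := by
    intro χ
    refine IsIntegral.of_pow hr ?_
    rw [div_pow, hρ, ← hat_pow K hdK hd0 hψ hψK htr χ, Finset.sum_div]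
    refine IsIntegral.sum _ fun b _ => ?_
    obtain ⟨w, hw⟩ := hdiv b
    rw [hw]
    have : χ (Algebra.norm E b) * (P * w) / P = χ (Algebra.norm E b) * (w : ℂ) := by
      field_simp
    rw [this]
    exact (mulchar_integral χ _).mul (isIntegral_algebraMap (x := w))
  have h1 : (((Fintype.card E : ℂ) - 1) * WS ψ d a) / ρ =
      ∑ χ : MulChar E ℂ, χ (a⁻¹) * ((∑ b : E, χ b * WS ψ d b) / ρ) := by
    simp_rw [← mul_div_assoc]
    rw [← Finset.sum_div]
    congr 1
    simp_rw [Finset.mul_sum, ← mul_assoc]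
    rw [Finset.sum_comm]
    simp_rw [← Finset.sum_mul, mulchar_orth a _ ha]
    simp
  rw [← hρ, ← div_pow, h1]
  exact (IsIntegral.sum _ fun χ _ => (mulchar_integral χ _).mul (hχ χ)).pow _
end descent

section psi
variable (p : ℕ) [hp : Fact p.Prime]

noncomputable def psi (K : Type) [Field K] [Algebra (ZMod p) K] : AddChar K ℂ :=
  (ZMod.stdAddChar (N := p)).compAddMonoidHom (Algebra.trace (ZMod p) K).toAddMonoidHom

variable (K : Type) [Field K] [Fintype K] [Algebra (ZMod p) K]

theorem psi_apply (x : K) : psi p K x = ZMod.stdAddChar (Algebra.trace (ZMod p) K x) := rfl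

theorem psi_eq (x : K) : psi p K x =
    Complex.exp (2 * Real.pi * Complex.I * ((Algebra.trace (ZMod p) K x).val : ℂ) / (p : ℂ)) := by
  rw [psi_apply, ZMod.stdAddChar_apply, ZMod.toCircle_apply]

theorem psi_eq_one (x : K) : psi p K x = 1 ↔ Algebra.trace (ZMod p) K x = 0 := by
  rw [psi_apply]
  constructor
  · intro h
    apply ZMod.injective_stdAddChar
    rw [h, AddChar.map_zero_eq_one]
  · intro h
    rw [h, AddChar.map_zero_eq_one]

theorem psi_ne_one : psi p K ≠ 1 := by
  intro h
  obtain ⟨x, hx⟩ := Algebra.trace_surjective (ZMod p) K 1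
  have h1 : psi p K x = 1 := by rw [h]; rfl
  rw [psi_eq_one, hx] at h1
  exact one_ne_zero h1

theorem psi_tower (E : Type) [Field E] [Fintype E] [Algebra (ZMod p) E] [Algebra E K] (x : K) :
    psi p K x = psi p E (Algebra.trace E K x) := by
  haveI : IsScalarTower (ZMod p) E K := IsScalarTower.of_algebraMap_eq' (RingHom.ext_zmod _ _)
  rw [psi_apply, psi_apply, Algebra.trace_trace]

theorem psi_frob (x : K) : psi p K (x ^ p) = psi p K x := by
  rw [psi_apply, psi_apply]
  congr 1
  have := Algebra.trace_eq_of_algEquiv (FiniteField.frobeniusAlgEquivOfAlgebraic (ZMod p) K) x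
  simpa [ZMod.card] using this

theorem psi_frob_iter (x : K) (i : ℕ) : psi p K (x ^ p ^ i) = psi p K x := by
  induction i with
  | zero => simp
  | succ i ih => rw [pow_succ, pow_mul, psi_frob, ih]

theorem psi_pow_p (x : K) : psi p K x ^ p = 1 := by
  rw [← AddChar.map_nsmul_eq_pow, nsmul_eq_mul]
  haveI : CharP K p := charP_of_injective_algebraMap (algebraMap (ZMod p) K).injective p
  simp

theorem psi_integral (x : K) : IsIntegral ℤ (psi p K x) :=
  IsIntegral.of_pow hp.out.pos (by rw [psi_pow_p]; exact isIntegral_one)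

theorem WS_integral (d : ℕ) (a : K) : IsIntegral ℤ (WS (psi p K) d a) :=
  IsIntegral.sum _ fun _ _ => psi_integral p K _

theorem int_of_rat_integral (z : ℂ) (h : IsIntegral ℤ z) (u v : ℤ) (hv : v ≠ 0)
    (hz : (v : ℂ) * z = u) : ∃ w : ℤ, z = w := by
  have hv' : (v : ℂ) ≠ 0 := by exact_mod_cast hv
  have e : z = algebraMap ℚ ℂ ((u : ℚ) / v) := by
    simp; field_simp; linear_combination hz
  rw [e] at h ⊢
  rw [isIntegral_algebraMap_iff (algebraMap ℚ ℂ).injective] at h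
  obtain ⟨w, hw⟩ := IsIntegrallyClosed.isIntegral_iff.1 h
  exact ⟨w, by rw [← hw]; simp⟩

theorem stdAddChar_eq_pow (y : ZMod p) :
    (ZMod.stdAddChar y : ℂ) = (ZMod.stdAddChar (1 : ZMod p) : ℂ) ^ y.val := by
  rw [← AddChar.map_nsmul_eq_pow, nsmul_eq_mul]
  simp

theorem stdAddChar_primitive : IsPrimitiveRoot (ZMod.stdAddChar (1 : ZMod p) : ℂ) p := by
  have := ZMod.stdAddChar_coe (N := p) 1
  have h := Complex.isPrimitiveRoot_exp p hp.out.ne_zero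
  convert h using 1
  simpa using this

/-- Galois conjugation of an integral-valued sum -/
theorem galois_sum {ι : Type} (s : Finset ι) (f : ι → ZMod p) (w : ℤ)
    (h : ∑ i ∈ s, (ZMod.stdAddChar (f i) : ℂ) = w) (j : ℕ) (hj : j.Coprime p) :
    ∑ i ∈ s, (ZMod.stdAddChar ((j : ZMod p) * f i) : ℂ) = w := by
  set ζ : ℂ := ZMod.stdAddChar (1 : ZMod p) with hζ
  have hpr : IsPrimitiveRoot ζ p := stdAddChar_primitive p
  let R : Polynomial ℤ := ∑ i ∈ s, Polynomial.X ^ (f i).val - Polynomial.C w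
  have e1 : Polynomial.aeval ζ R = 0 := by
    simp only [R, map_sub, map_sum, map_pow, Polynomial.aeval_X]
    rw [Finset.sum_congr rfl (fun i _ => (stdAddChar_eq_pow p (f i)).symm), h]
    simp
  have hint : IsIntegral ℤ ζ := hpr.isIntegral hp.out.pos
  have hdvd := minpoly.isIntegrallyClosed_dvd hint e1
  rw [hpr.minpoly_eq_pow_coprime hj] at hdvd
  have e2 : Polynomial.aeval (ζ ^ j) R = 0 := by
    obtain ⟨S, hS⟩ := hdvd
    rw [hS, map_mul, minpoly.aeval, zero_mul]
  simp only [R, map_sub, map_sum, map_pow, Polynomial.aeval_X] at e2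
  have e3 : ∀ i, (ZMod.stdAddChar ((j : ZMod p) * f i) : ℂ) = (ζ ^ j) ^ (f i).val := by
    intro i
    rw [← nsmul_eq_mul, AddChar.map_nsmul_eq_pow, stdAddChar_eq_pow, ← pow_mul, ← pow_mul, mul_comm]
  rw [Finset.sum_congr rfl (fun i _ => e3 i)]
  simpa [sub_eq_zero] using e2

/-- base case: all Weil sums integral implies `d` trivial on the prime field -/
theorem base_case {d : ℕ} (hd : d.Coprime (Fintype.card K - 1)) (hd0 : d ≠ 0)
    (hint : ∀ a : K, ∃ w : ℤ, WS (psi p K) d a = w) (j : ZMod p) : j ^ d = j := by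
  by_cases hj : j = 0
  · subst hj; exact zero_pow hd0
  have hψ := psi_ne_one p K
  have hjc : j.val.Coprime p := by
    have := ZMod.val_coe_unit_coprime (Units.mk0 j hj)
    simpa using this
  let J : K := algebraMap (ZMod p) K j
  have h1 : ∀ a : K, ∑ x : K, psi p K (J * x ^ d + J * (a * x)) = WS (psi p K) d a := by
    intro a
    obtain ⟨w, hw⟩ := hint a
    have := galois_sum p Finset.univ (fun x : K => Algebra.trace (ZMod p) K (x ^ d + a * x)) w hw
      j.val hjc
    rw [hw, ← this]
    refine Finset.sum_congr rfl fun x _ => ?_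
    rw [psi_apply, ← mul_add]
    congr 1
    rw [ZMod.natCast_zmod_val, ← Algebra.smul_def, map_smul, smul_eq_mul]
  have h2 := WS_sum_sq' hd hd0 hψ J
  simp_rw [h1] at h2
  have h3 := WS_sum_sq' hd hd0 hψ 1
  simp only [one_mul, one_pow, sub_self] at h3
  have h4 : ∑ a : K, WS (psi p K) d a * WS (psi p K) d a = (Fintype.card K : ℂ) * ∑ x : K, psi p K (x ^ d * 0) := by
    rw [← h3]; rfl
  rw [h4, sum_psi_pow hd hd0 hψ, sum_psi_pow hd hd0 hψ, if_pos rfl] at h2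
  have hq : (Fintype.card K : ℂ) ≠ 0 := by exact_mod_cast Fintype.card_ne_zero
  have h5 := mul_left_cancel₀ hq h2
  have h6 : J - J ^ d = 0 := by
    by_contra h
    rw [if_neg h] at h5
    exact hq h5
  have h7 : J = J ^ d := sub_eq_zero.1 h6
  simp only [J, ← map_pow] at h7
  exact ((algebraMap (ZMod p) K).injective h7).symm

/-- degenerate case -/
theorem degenerate {d : ℕ} (b : K)
    (h : ∀ x : K, psi p K (x ^ d + b * x) = 1) (hd : d.Coprime (Fintype.card K - 1)) (hd0 : d ≠ 0) :
    ∃ i : ℕ, ∀ x : K, x ^ d = x ^ p ^ i := by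
  set n := Module.finrank (ZMod p) K with hn
  have hnpos : 0 < n := Module.finrank_pos
  by_contra hcon
  push Not at hcon
  have htr : ∀ x : K, ∑ i ∈ Finset.range n, (x ^ d) ^ p ^ i +
      ∑ i ∈ Finset.range n, b ^ p ^ i * x ^ p ^ i = 0 := by
    intro x
    have h1 := (psi_eq_one p K _).1 (h x)
    have h2 := FiniteField.algebraMap_trace_eq_sum_pow (ZMod p) K (x ^ d)
    have h3 := FiniteField.algebraMap_trace_eq_sum_pow (ZMod p) K (b * x)
    simp only [Nat.card_eq_fintype_card, ZMod.card, mul_pow] at h2 h3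
    rw [← h2, ← h3, ← map_add, ← map_add, h1, map_zero]
  let F : Fin n ⊕ Fin n → (K →* K) := Sum.elim (fun i => powMonoidHom (d * p ^ i.val)) (fun i => powMonoidHom (p ^ i.val))
  haveI : CharP K p := charP_of_injective_algebraMap (algebraMap (ZMod p) K).injective p
  have hcard : Fintype.card K = p ^ n := by
    have := Module.card_eq_pow_finrank (K := ZMod p) (V := K)
    rwa [ZMod.card] at this
  obtain ⟨g, hg⟩ := IsCyclic.exists_generator (α := Kˣ)
  have hord : orderOf g = p ^ n - 1 := by
    rw [orderOf_eq_card_of_forall_mem_zpowers hg, Nat.card_eq_fintype_card, Fintype.card_units, hcard]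
  have hfi : ∀ i j : Fin n, (∀ x : K, x ^ p ^ i.val = x ^ p ^ j.val) → i = j := by
    intro i j hij
    have h1 := hij g
    have h2 : g ^ p ^ i.val = g ^ p ^ j.val := by ext; simpa using h1
    have hlt : ∀ k : Fin n, n ≠ 1 → p ^ k.val < p ^ n - 1 := by
      intro k hk
      have a1 : p ^ k.val ≤ p ^ (n-1) := Nat.pow_le_pow_right hp.out.pos (by omega)
      have a2 : p ^ n = p * p ^ (n-1) := by rw [← pow_succ']; congr 1; omega
      have a3 := hp.out.two_le
      have a4 : p ^ 1 ≤ p ^ (n-1) := Nat.pow_le_pow_right hp.out.pos (by omega)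
      nlinarith [Nat.sub_add_cancel (Nat.one_le_pow n p hp.out.pos)]
    by_cases hn1 : n = 1
    · apply Fin.ext; omega
    · have := pow_injOn_Iio_orderOf (x := g) (by rw [hord]; exact hlt i hn1) (by rw [hord]; exact hlt j hn1) h2
      exact Fin.ext (Nat.pow_right_injective hp.out.two_le this)
  have hfinj : ∀ i : ℕ, Function.Injective (fun x : K => x ^ p ^ i) := fun i => by
    have := (iterateFrobenius K p i).injective
    simpa [Function.Injective, iterateFrobenius_def] using this
  have hFinj : Function.Injective F := by
    intro u v huv
    rcases u with i | i <;> rcases v with j | j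
    · congr 1
      apply hfi
      intro x
      obtain ⟨y, rfl⟩ := (pow_bij hd hd0).2 x
      have := DFunLike.congr_fun huv y
      simpa [F, pow_mul] using this
    · exfalso
      obtain ⟨x, hx⟩ := hcon (j.val + (n - i.val))
      apply hx
      apply hfinj i
      have := DFunLike.congr_fun huv x
      simp only [F, Sum.elim_inl, Sum.elim_inr, powMonoidHom_apply, pow_mul] at this
      show (x ^ d) ^ p ^ i.val = (x ^ p ^ (j.val + (n - i.val))) ^ p ^ i.val
      rw [this, ← pow_mul, ← pow_add, add_assoc, Nat.sub_add_cancel i.2.le, pow_add, mul_comm, pow_mul, ← hcard, FiniteField.pow_card]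
    · exfalso
      obtain ⟨x, hx⟩ := hcon (i.val + (n - j.val))
      apply hx
      apply hfinj j
      have := DFunLike.congr_fun huv x
      simp only [F, Sum.elim_inl, Sum.elim_inr, powMonoidHom_apply, pow_mul] at this
      show (x ^ d) ^ p ^ j.val = (x ^ p ^ (i.val + (n - j.val))) ^ p ^ j.val
      rw [← this, ← pow_mul, ← pow_add, add_assoc, Nat.sub_add_cancel j.2.le, pow_add, mul_comm, pow_mul, ← hcard, FiniteField.pow_card]
    · congr 1
      apply hfi
      intro x
      exact DFunLike.congr_fun huv x
  have hli := (linearIndependent_monoidHom K K).comp F hFinj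
  rw [Fintype.linearIndependent_iff] at hli
  have := hli (Sum.elim (fun _ => 1) (fun i => b ^ p ^ i.val)) (by
    ext x
    have := htr x
    rw [Finset.sum_range, Finset.sum_range] at this
    simpa [F, Fintype.sum_sum_type, pow_mul] using this) (Sum.inl ⟨0, hnpos⟩)
  simp at this
end psi

section step
variable (p : ℕ) [hp : Fact p.Prime]

theorem niho (F E : Type) [Field F] [Fintype F] [Algebra (ZMod p) F] [Field E] [Fintype E]
    [Algebra (ZMod p) E] [Algebra F E] {d : ℕ} (hd0 : d ≠ 0) (g : ℕ) (hg : Fintype.card F = p ^ g)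
    (i : ℕ) (hi : ∀ x : F, x ^ d = x ^ p ^ i) (a : E) :
    ∃ z : ℕ, 1 ≤ z ∧ ((Fintype.card F : ℂ) - 1) * WS (psi p E) d a + Fintype.card E =
      Fintype.card F * z := by
  have hg0 : g ≠ 0 := by
    rintro rfl
    have := Fintype.one_lt_card (α := F)
    rw [hg] at this; simp at this
  let j := i * (g - 1)
  have hij : i + j = g * i := by
    obtain ⟨k, rfl⟩ := Nat.exists_eq_succ_of_ne_zero hg0
    simp only [j, Nat.succ_eq_add_one, Nat.add_sub_cancel]; ring
  let c : E → E := fun x => (x ^ d) ^ p ^ j + a * x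
  have hF : ∀ l : F, (l ^ p ^ i) ^ p ^ j = l := by
    intro l
    rw [← pow_mul, ← pow_add, hij, pow_mul, ← hg, FiniteField.pow_card_pow]
  have key : ∀ (l : F) (x : E), psi p E ((algebraMap F E l * x) ^ d + a * (algebraMap F E l * x)) =
      psi p F (l * Algebra.trace F E (c x)) := by
    intro l x
    rw [AddChar.map_add_eq_mul, ← psi_frob_iter p E ((algebraMap F E l * x) ^ d) j,
      ← AddChar.map_add_eq_mul, mul_pow, mul_pow, ← map_pow, ← map_pow, hi, hF, psi_tower p E F]
    congr 1
    rw [← smul_eq_mul l, ← map_smul, Algebra.smul_def]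
    congr 1
    simp only [c]; ring
  have h1 : ∑ l : F, ∑ x : E, psi p E ((algebraMap F E l * x) ^ d + a * (algebraMap F E l * x)) =
      ((Fintype.card F : ℂ) - 1) * WS (psi p E) d a + Fintype.card E := by
    have h2 : ∀ l : F, ∑ x : E, psi p E ((algebraMap F E l * x) ^ d + a * (algebraMap F E l * x)) =
        WS (psi p E) d a + (if l = 0 then (Fintype.card E : ℂ) - WS (psi p E) d a else 0) := by
      intro l
      split_ifs with h
      · subst h
        simp [hd0]
      · rw [add_zero]
        have : algebraMap F E l ≠ 0 := by simpa using h
        exact Fintype.sum_bijective (fun x => algebraMap F E l * x) (mulLeft_bijective₀ _ this) _ _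
          (fun u => rfl)
    simp_rw [h2]
    rw [Finset.sum_add_distrib]
    simp
    ring
  rw [← h1, Finset.sum_comm]
  simp_rw [key, sum_psi_mul (psi_ne_one p F)]
  refine ⟨(Finset.univ.filter fun x : E => Algebra.trace F E (c x) = 0).card, ?_, ?_⟩
  · rw [Nat.one_le_iff_ne_zero, Finset.card_ne_zero]
    refine ⟨0, ?_⟩
    simp [c, hd0, hp.out.ne_zero]
  · rw [← Finset.sum_filter]
    simp [mul_comm]

theorem val_lemma (m g r : ℕ) (w : ℤ) (hm : g * r + 1 ≤ m) (h : (p : ℤ) ^ m ∣ w ^ r) :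
    (p : ℤ) ^ (g + 1) ∣ w := by
  by_cases hw : w = 0
  · subst hw; simp
  have hpp : Prime (p : ℤ) := Nat.prime_iff_prime_int.1 hp.out
  have hfin : FiniteMultiplicity (p : ℤ) w :=
    Int.finiteMultiplicity_iff.2 ⟨by simpa using hp.out.ne_one, hw⟩
  obtain ⟨u, hwu, hu⟩ := hfin.exists_eq_pow_mul_and_not_dvd
  generalize multiplicity (p : ℤ) w = v at hwu
  subst hwu
  have h2 : ¬ (p : ℤ) ∣ u ^ r := fun h => hu (hpp.dvd_of_dvd_pow h)
  rw [mul_pow, ← pow_mul] at h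
  have h3 : (p : ℤ) ^ m ∣ (p : ℤ) ^ (v * r) :=
    hpp.pow_dvd_of_dvd_mul_right m h2 h
  have h4 : m ≤ v * r := (Nat.pow_dvd_pow_iff_le_right hp.out.one_lt).1 (by exact_mod_cast h3)
  have h5 : g < v := by
    by_contra hlt
    have : v * r ≤ g * r := Nat.mul_le_mul_right _ (by omega)
    omega
  exact Dvd.dvd.mul_right (pow_dvd_pow _ h5) _

theorem all_one (E : Type) [Fintype E] (f : E → ℂ) (hf : ∀ x, ‖f x‖ = 1) (w : ℤ)
    (hw : ∑ x, f x = w) (h : (Fintype.card E : ℤ) ≤ w) (x : E) : f x = 1 := by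
  have h1 : ∑ x, (1 - (f x).re) ≤ 0 := by
    have : (∑ x, f x).re = w := by rw [hw]; simp
    rw [Complex.re_sum] at this
    rw [Finset.sum_sub_distrib, this]
    have h' : (Fintype.card E : ℝ) ≤ w := by exact_mod_cast h
    simpa using h'
  have h0 : ∀ x ∈ Finset.univ, 0 ≤ 1 - (f x).re := fun x _ => by
    have := Complex.re_le_norm (f x)
    rw [hf] at this; linarith
  have h2 := (Finset.sum_eq_zero_iff_of_nonneg h0).1 (le_antisymm h1 (Finset.sum_nonneg h0)) x (Finset.mem_univ _)
  have h3 : (f x).re = 1 := by linarith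
  have h4 := Complex.sq_norm (f x)
  rw [hf, Complex.normSq_apply, h3] at h4
  have h5 : (f x).im = 0 := by nlinarith
  exact Complex.ext (by simpa using h3) (by simpa using h5)

theorem psi_norm (E : Type) [Field E] [Fintype E] [Algebra (ZMod p) E] (x : E) : ‖psi p E x‖ = 1 :=
  Complex.norm_eq_one_of_pow_eq_one (psi_pow_p p E x) hp.out.ne_zero

theorem step (F E K : Type) [Field F] [Fintype F] [Algebra (ZMod p) F] [Field E] [Fintype E]
    [Algebra (ZMod p) E] [Algebra F E] [Field K] [Fintype K] [Algebra (ZMod p) K] [Algebra E K]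
    {d : ℕ} (hd : d.Coprime (Fintype.card K - 1)) (hd0 : d ≠ 0)
    (hEF : Module.finrank F E = 2) (i : ℕ) (hi : ∀ x : F, x ^ d = x ^ p ^ i)
    (m : ℕ) (hm : Fintype.card K < (p ^ m) ^ 2)
    (hdiv : ∀ a : K, ∃ w : ℤ, WS (psi p K) d a = (p ^ m : ℕ) * w) :
    ∃ i : ℕ, ∀ x : E, x ^ d = x ^ p ^ i := by
  have hp1 := hp.out.one_lt
  obtain ⟨g, hg⟩ : ∃ g, Fintype.card F = p ^ g := ⟨_, by
    rw [Module.card_eq_pow_finrank (K := ZMod p) (V := F), ZMod.card]⟩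
  have hQ1 := Fintype.one_lt_card (α := F)
  set Q := Fintype.card F with hQ
  have hE : Fintype.card E = Q ^ 2 := by
    rw [Module.card_eq_pow_finrank (K := F) (V := E), hEF]
  set r := Module.finrank E K with hr
  have hK : Fintype.card K = (Q ^ 2) ^ r := by
    rw [Module.card_eq_pow_finrank (K := E) (V := K), hE]
  have hmgr : g * r + 1 ≤ m := by
    rw [hK, hg, ← pow_mul, ← pow_mul, ← pow_mul] at hm
    have h1 := (Nat.pow_lt_pow_iff_right hp1).1 hm
    have h2 : g * (2 * r) = 2 * (g * r) := by ring
    have h3 : g * 2 * r = 2 * (g * r) := by ring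
    omega
  have hdE : d.Coprime (Fintype.card E - 1) := by
    refine Nat.Coprime.coprime_dvd_right ?_ hd
    rw [hK, hE]
    simpa using Nat.sub_dvd_pow_sub_pow (Q ^ 2) 1 r
  have hψ := psi_ne_one p E
  have hint : ∀ a : E, ∃ w : ℤ, WS (psi p E) d a = w ∧ 0 ≤ w := by
    intro a
    by_cases ha : a = 0
    · subst ha
      exact ⟨0, by rw [WS_zero hdE hd0 hψ]; simp, le_rfl⟩
    obtain ⟨z, hz1, hz⟩ := niho p F E hd0 g hg i hi a
    obtain ⟨w, hw⟩ := int_of_rat_integral _ (WS_integral p E d a) ((Q : ℤ) * z - Q ^ 2) (Q - 1)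
      (by omega) (by rw [hE] at hz; push_cast at hz ⊢; linear_combination hz)
    refine ⟨w, hw, ?_⟩
    have hz' : ((Q : ℤ) - 1) * w + Q ^ 2 = Q * z := by
      rw [hw, hE] at hz
      exact_mod_cast hz
    have hd1 := descent K hd hd0 hψ (psi_ne_one p K) (psi_tower p K E) (p ^ m)
      (pow_ne_zero _ hp.out.ne_zero) hdiv a ha
    rw [hw, hE] at hd1
    obtain ⟨y, hy⟩ := int_of_rat_integral _ hd1 ((((Q : ℤ) ^ 2 - 1) * w) ^ r) (p ^ m : ℕ)
      (by exact_mod_cast pow_ne_zero _ hp.out.ne_zero)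
      (by
        have : ((p ^ m : ℕ) : ℂ) ≠ 0 := by exact_mod_cast pow_ne_zero _ hp.out.ne_zero
        rw [Int.cast_natCast, mul_div_cancel₀ _ this]; push_cast; rfl)
    have hy' : (((Q : ℤ) ^ 2 - 1) * w) ^ r = p ^ m * y := by
      have : ((p ^ m : ℕ) : ℂ) ≠ 0 := by exact_mod_cast pow_ne_zero _ hp.out.ne_zero
      rw [div_eq_iff this] at hy
      have h' : (((((Q : ℤ) ^ 2 - 1) * w) ^ r : ℤ) : ℂ) = ((p ^ m * y : ℤ) : ℂ) := by
        push_cast at hy ⊢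
        linear_combination hy
      exact_mod_cast h'
    have hg0 : g ≠ 0 := by
      rintro rfl
      rw [hg] at hQ1; simp at hQ1
    have hcop : IsCoprime ((p : ℤ) ^ m) (((Q : ℤ) ^ 2 - 1) ^ r) := by
      apply IsCoprime.pow
      obtain ⟨k, rfl⟩ := Nat.exists_eq_succ_of_ne_zero hg0
      refine ⟨p ^ k * Q, -1, ?_⟩
      have : (Q : ℤ) = p ^ k * p := by rw [hg]; push_cast; rw [pow_succ]
      rw [this]; ring
    have hdv : (p : ℤ) ^ m ∣ w ^ r := by
      refine hcop.dvd_of_dvd_mul_left (z := w ^ r) ?_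
      rw [← mul_pow, hy']
      exact dvd_mul_right _ _
    obtain ⟨t, ht⟩ := val_lemma p m g r w hmgr hdv
    have hQg : (Q : ℤ) = p ^ g := by rw [hg]; push_cast; rfl
    rw [pow_succ, ← hQg] at ht
    have hQpos : (1 : ℤ) < Q := by exact_mod_cast hQ1
    have hp2 : (2 : ℤ) ≤ p := by exact_mod_cast hp.out.two_le
    have hz2 : (1 : ℤ) ≤ z := by exact_mod_cast hz1
    by_contra hneg
    have htneg : t ≤ -1 := by
      by_contra hh
      have : 0 ≤ t := by omega
      exact hneg (by rw [ht]; positivity)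
    have a1 : w ≤ -(2 * Q) := by
      rw [ht]
      nlinarith [mul_le_mul_of_nonneg_left hp2 (by omega : (0:ℤ) ≤ Q), mul_pos (by omega : (0:ℤ) < Q) (by omega : (0:ℤ) < p)]
    nlinarith
  choose w hw hw0 using hint
  have s1 : ∑ a, w a = (Q : ℤ) ^ 2 := by
    have := WS_sum hd0 hψ
    simp_rw [hw, hE] at this
    exact_mod_cast this
  have s2 : ∑ a, w a ^ 2 = ((Q : ℤ) ^ 2) ^ 2 := by
    have := WS_sum_sq hdE hd0 hψ
    simp_rw [hw, hE] at this
    exact_mod_cast this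
  obtain ⟨b, hb⟩ : ∃ b, (Q : ℤ) ^ 2 ≤ w b := by
    by_contra hcon
    push Not at hcon
    have : ∑ a, w a ^ 2 ≤ ∑ a, ((Q : ℤ) ^ 2 - 1) * w a := by
      refine Finset.sum_le_sum fun a _ => ?_
      have := hcon a
      have := hw0 a
      nlinarith
    rw [← Finset.mul_sum, s1, s2] at this
    have hQpos : (1 : ℤ) < Q := by exact_mod_cast hQ1
    nlinarith
  refine degenerate p E b ?_ hdE hd0
  exact all_one E _ (fun x => psi_norm p E _) (w b) (hw b) (by rw [hE]; exact_mod_cast hb)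

end step

section main

theorem tower_induction (p : ℕ) [hp : Fact p.Prime] (K : Type) [Field K] [Fintype K]
    [Algebra (ZMod p) K] (s : ℕ) (hs : 2 ^ s ∣ Module.finrank (ZMod p) K)
    {d : ℕ} (hd : d.Coprime (Fintype.card K - 1)) (hd0 : d ≠ 0)
    (m : ℕ) (hm : Fintype.card K < (p ^ m) ^ 2)
    (hdiv : ∀ a : K, ∃ w : ℤ, WS (psi p K) d a = (p ^ m : ℕ) * w) (t : ℕ) (ht : t ≤ s) :
    ∃ i : ℕ, ∀ x : GaloisField p (2 ^ t), x ^ d = x ^ p ^ i := by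
  induction t with
  | zero =>
    refine ⟨0, ?_⟩
    have base := base_case p K hd hd0 (fun a => by
      obtain ⟨w, hw⟩ := hdiv a
      exact ⟨(p ^ m : ℕ) * w, by rw [hw]; push_cast; rfl⟩)
    have : ∀ n, n = 1 → ∀ x : GaloisField p n, x ^ d = x ^ p ^ 0 := by
      intro n hn
      subst hn
      intro x
      apply (GaloisField.equivZmodP p).injective
      rw [map_pow, base]
      simp
    exact this _ (pow_zero 2)
  | succ t ih =>
    obtain ⟨i, hi⟩ := ih (by omega)
    letI : Fintype (GaloisField p (2 ^ t)) := Fintype.ofFinite _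
    letI : Fintype (GaloisField p (2 ^ (t + 1))) := Fintype.ofFinite _
    have fF : Module.finrank (ZMod p) (GaloisField p (2 ^ t)) = 2 ^ t :=
      GaloisField.finrank p (by positivity)
    have fE : Module.finrank (ZMod p) (GaloisField p (2 ^ (t + 1))) = 2 ^ (t + 1) :=
      GaloisField.finrank p (by positivity)
    obtain ⟨φ⟩ := FiniteField.nonempty_algHom_of_finrank_dvd (F := ZMod p)
      (K := GaloisField p (2 ^ t)) (L := GaloisField p (2 ^ (t + 1)))
      (by rw [fF, fE, pow_succ]; exact dvd_mul_right _ _)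
    obtain ⟨φ'⟩ := FiniteField.nonempty_algHom_of_finrank_dvd (F := ZMod p)
      (K := GaloisField p (2 ^ (t + 1))) (L := K)
      (by rw [fE]; exact (pow_dvd_pow 2 ht).trans hs)
    letI : Algebra (GaloisField p (2 ^ t)) (GaloisField p (2 ^ (t + 1))) := φ.toRingHom.toAlgebra
    letI : Algebra (GaloisField p (2 ^ (t + 1))) K := φ'.toRingHom.toAlgebra
    have : IsScalarTower (ZMod p) (GaloisField p (2 ^ t)) (GaloisField p (2 ^ (t + 1))) :=
      IsScalarTower.of_algebraMap_eq' (RingHom.ext_zmod _ _)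
    have h2 : Module.finrank (GaloisField p (2 ^ t)) (GaloisField p (2 ^ (t + 1))) = 2 := by
      have := Module.finrank_mul_finrank (ZMod p) (GaloisField p (2 ^ t))
        (GaloisField p (2 ^ (t + 1)))
      rw [fF, fE] at this
      exact Nat.eq_of_mul_eq_mul_left (by positivity) (this.trans (pow_succ 2 t))
    exact step p (GaloisField p (2 ^ t)) (GaloisField p (2 ^ (t + 1))) K hd hd0 h2 i hi m hm hdiv

theorem natural_version (p : ℕ) [hp : Fact p.Prime] (K : Type) [Field K] [Fintype K]
    [Algebra (ZMod p) K] (s : ℕ) (hs : 2 ^ s ∣ Module.finrank (ZMod p) K)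
    {d : ℕ} (hd : d.Coprime (Fintype.card K - 1)) (hd0 : d ≠ 0) (A : ℂ)
    (hmem : ∃ a : K, WS (psi p K) d a = A)
    (hval : ∀ a : K, WS (psi p K) d a = 0 ∨ WS (psi p K) d a = A ∨ WS (psi p K) d a = -A) :
    (p : ℝ) ^ (2 ^ s) * Fintype.card K ≤ ‖A‖ ^ 2 := by
  have hψ := psi_ne_one p K
  set V := (Finset.univ.filter (fun u : K => (u + 1) ^ d = u ^ d + 1)).card with hV
  have hf : ∀ a : K, ∃ f : ℤ, WS (psi p K) d a = A * f ∧ f ^ 3 = f ∧ f ^ 2 ≤ 1 ∧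
      (a = 0 → f = 0) := by
    intro a
    by_cases ha : a = 0
    · exact ⟨0, by rw [ha, WS_zero hd hd0 hψ]; simp, by norm_num, by norm_num, fun _ => rfl⟩
    rcases hval a with h | h | h
    · exact ⟨0, by rw [h]; simp, by norm_num, by norm_num, fun _ => rfl⟩
    · exact ⟨1, by rw [h]; simp, by norm_num, by norm_num, fun h => absurd h ha⟩
    · exact ⟨-1, by rw [h]; simp, by norm_num, by norm_num, fun h => absurd h ha⟩
  choose f hf1 hf3 hf2 hf0 using hf
  set q := Fintype.card K with hq
  have hq1 : 1 < q := Fintype.one_lt_card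
  have hqc : (q : ℂ) ≠ 0 := by exact_mod_cast (by omega : q ≠ 0)
  have m1 : A * ((∑ a, f a : ℤ) : ℂ) = q := by
    rw [hq, ← WS_sum hd0 hψ]
    simp_rw [hf1]
    push_cast
    rw [Finset.mul_sum]
  have m2 : A ^ 2 * ((∑ a, f a ^ 2 : ℤ) : ℂ) = (q : ℂ) ^ 2 := by
    rw [hq, ← WS_sum_sq hd hd0 hψ]
    simp_rw [hf1]
    push_cast
    rw [Finset.mul_sum]
    exact Finset.sum_congr rfl fun a _ => by ring
  have m3 : A ^ 3 * ((∑ a, f a : ℤ) : ℂ) = (q : ℂ) ^ 2 * V := by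
    rw [hq, hV, ← WS_sum_cube hd hd0 hψ]
    have : ∑ a, f a = ∑ a, f a ^ 3 := Finset.sum_congr rfl fun a _ => (hf3 a).symm
    rw [this]
    simp_rw [hf1]
    push_cast
    rw [Finset.mul_sum]
    exact Finset.sum_congr rfl fun a _ => by ring
  have hA2 : A ^ 2 = q * V := by
    apply mul_left_cancel₀ hqc
    linear_combination m3 - A ^ 2 * m1
  set S := ∑ a, f a with hS
  have hS0 : S ≠ 0 := by
    intro h
    rw [h] at m1
    apply hqc
    rw [← m1]; simp
  have hAint : IsIntegral ℤ A := by
    obtain ⟨a, ha⟩ := hmem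
    rw [← ha]; exact WS_integral p K d a
  obtain ⟨α, hα⟩ := int_of_rat_integral A hAint q S hS0 (by rw [mul_comm, m1]; simp)
  have hαS : α * S = q := by
    rw [hα] at m1; exact_mod_cast m1
  have hqn : q = p ^ Module.finrank (ZMod p) K := by
    rw [hq, Module.card_eq_pow_finrank (K := ZMod p) (V := K), ZMod.card]
  obtain ⟨m, -, hm⟩ := (Nat.dvd_prime_pow hp.out).1 (show α.natAbs ∣ p ^ Module.finrank (ZMod p) K by
    rw [← hqn]
    have : (α : ℤ) ∣ q := ⟨S, hαS.symm⟩
    exact Int.natCast_dvd_natCast.1 (by simpa using this))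
  have hT : ∑ a, f a ^ 2 ≤ (q : ℤ) - 1 := by
    have h1 : ∑ a, f a ^ 2 ≤ ∑ a : K, (if a = 0 then (0 : ℤ) else 1) := by
      refine Finset.sum_le_sum fun a _ => ?_
      split_ifs with h
      · rw [hf0 a h]; norm_num
      · exact hf2 a
    refine h1.trans (le_of_eq ?_)
    rw [← Finset.sum_erase_add _ _ (Finset.mem_univ (0 : K)), if_pos rfl, add_zero]
    rw [Finset.sum_congr rfl (g := fun _ => (1 : ℤ)) (fun x hx => if_neg (Finset.ne_of_mem_erase hx))]
    simp [Finset.card_erase_of_mem, hq]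
    rw [Nat.cast_sub (by omega)]; simp
  have hT2 : α ^ 2 * ∑ a, f a ^ 2 = (q : ℤ) ^ 2 := by
    rw [hα] at m2; exact_mod_cast m2
  have hα2 : ((p : ℤ) ^ m) ^ 2 = α ^ 2 := by
    rw [← Int.natAbs_sq α, hm]; push_cast; rfl
  have hmq : q < (p ^ m) ^ 2 := by
    have : (q : ℤ) < ((p : ℤ) ^ m) ^ 2 := by
      rw [hα2]
      by_contra hlt
      have hqz : (1 : ℤ) < q := by exact_mod_cast hq1
      have : (0 : ℤ) ≤ ∑ a, f a ^ 2 := Finset.sum_nonneg fun a _ => sq_nonneg _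
      nlinarith
    exact_mod_cast this
  have hdiv : ∀ a : K, ∃ w : ℤ, WS (psi p K) d a = (p ^ m : ℕ) * w := by
    intro a
    rcases Int.natAbs_eq α with h | h
    · refine ⟨f a, ?_⟩
      rw [hf1, hα, h, hm]; push_cast; rfl
    · refine ⟨-f a, ?_⟩
      rw [hf1, hα, h, hm]; push_cast; ring
  obtain ⟨i, hi⟩ := tower_induction p K s hs hd hd0 m hmq hdiv s le_rfl
  have hcardV : p ^ (2 ^ s) ≤ V := by
    letI : Fintype (GaloisField p (2 ^ s)) := Fintype.ofFinite _
    have fF : Module.finrank (ZMod p) (GaloisField p (2 ^ s)) = 2 ^ s :=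
      GaloisField.finrank p (by positivity)
    obtain ⟨φ⟩ := FiniteField.nonempty_algHom_of_finrank_dvd (F := ZMod p)
      (K := GaloisField p (2 ^ s)) (L := K) (by rw [fF]; exact hs)
    have hc : Fintype.card (GaloisField p (2 ^ s)) = p ^ (2 ^ s) := by
      rw [Module.card_eq_pow_finrank (K := ZMod p) (V := GaloisField p (2 ^ s)), ZMod.card, fF]
    rw [← hc, hV, ← Finset.card_univ]
    refine Finset.card_le_card_of_injOn φ ?_ (φ.injective.injOn)
    intro x _
    simp only [Finset.coe_filter, Finset.mem_univ, true_and, Set.mem_setOf_eq]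
    rw [← map_one φ, ← map_add, ← map_pow, ← map_pow, ← map_add, hi, hi, add_pow_char_pow, one_pow]
  have hn : ‖A‖ ^ 2 = q * V := by
    rw [← norm_pow, hA2]; simp
  rw [hn, mul_comm]
  have : (p : ℝ) ^ (2 ^ s) ≤ V := by exact_mod_cast hcardV
  gcongr

end main

theorem stmt5 (p : ℕ) [Fact p.Prime] (K : Type) [Field K] [Fintype K] [CharP K p]
    [Algebra (ZMod p) K]
    (s : ℕ) (hs : ∃ m : ℕ, Odd m ∧ Module.finrank (ZMod p) K = 2 ^ s * m)
    (d : ℤ) (hd : Int.gcd d ((Fintype.card K : ℤ) - 1) = 1)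
    (A : ℂ) (hA : A ≠ 0)
    (hval : weilValues p K d = {0, A, -A}) :
    (p : ℝ) ^ (2 ^ s) * Fintype.card K ≤ ‖A‖ ^ 2 := by
  have h0 : (0 : ℂ) ∈ weilValues p K d := by rw [hval]; simp
  have h1 : A ∈ weilValues p K d := by rw [hval]; simp
  have hq3 : 3 ≤ Fintype.card K := by
    by_contra hlt
    have h2 := Fintype.one_lt_card (α := K)
    obtain ⟨a, ha0, ha⟩ := h0
    obtain ⟨b, hb0, hb⟩ := h1
    have hab : a ≠ b := by
      rintro rfl
      exact hA (hb.symm.trans ha)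
    have : ({0, a, b} : Finset K).card ≤ Fintype.card K := Finset.card_le_univ _
    rw [Finset.card_eq_three.2 ⟨0, a, b, ha0.symm, hb0.symm, hab, rfl⟩] at this
    omega
  set N := Fintype.card K - 1 with hN
  have hNc : (Fintype.card K : ℤ) - 1 = N := by omega
  rw [hNc] at hd
  obtain ⟨e, he⟩ : ∃ e : ℕ, (e : ℤ) = d % N + N := ⟨(d % N + N).toNat,
    Int.toNat_of_nonneg (by have := Int.emod_nonneg d (b := N) (by omega); omega)⟩
  have hmodnn := Int.emod_nonneg d (b := N) (by omega)
  have he0 : e ≠ 0 := by omega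
  have hdiv := Int.emod_add_mul_ediv d N
  have hco : e.Coprime N := by
    rw [Nat.Coprime, ← Int.gcd_natCast_natCast, he]
    rw [← hd, Int.gcd_add_self_left, Int.gcd_emod]
  have hpow : ∀ x : K, x ^ d = x ^ e := by
    intro x
    by_cases hx : x = 0
    · subst hx
      rw [zero_pow he0, zero_zpow]
      rintro rfl
      simp at hd
      omega
    · have hxN : x ^ N = 1 := FiniteField.pow_card_sub_one_eq_one x hx
      have : d = e + N * (d / N - 1) := by rw [he]; linear_combination -hdiv
      rw [this, zpow_add₀ hx, zpow_mul, zpow_natCast, zpow_natCast, hxN, one_zpow, mul_one]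
  have hW : ∀ a : K, weilSum p K d a = WS (psi p K) e a := by
    intro a
    unfold weilSum WS
    refine Finset.sum_congr rfl fun x _ => ?_
    rw [hpow, psi_eq]; rfl
  refine natural_version p K s ?_ hco he0 A ?_ ?_
  · obtain ⟨m, -, hm⟩ := hs
    rw [hm]; exact dvd_mul_right _ _
  · obtain ⟨a, -, ha⟩ := h1
    exact ⟨a, by rw [← hW, ha]⟩
  · intro a
    by_cases ha : a = 0
    · left
      rw [ha]; exact WS_zero hco he0 (psi_ne_one p K)
    · have : weilSum p K d a ∈ weilValues p K d := ⟨a, ha, rfl⟩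
      rw [hval, hW] at this
      simpa using this
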